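/- Let n ≥ 2, α ∈ [0,N) and γ > 1 be such that αγ < N, let Q ⊆ ℝ^{n+1} be a parabolic cylinder, and let q ∈ (0,∞). Then there exists a constant c depending only on α, γ, n and q such that for every measurable function g with ‖g‖_{L(γ,q)(Q)} < ∞, ‖M*_{α,Q}(g)‖_{L(Nγ/(N−αγ), q)(Q)} ≤ c ‖g‖_{L(γ,q)(Q)}. -/

import Mathlib

open MeasureTheory Set ENNReal

/-- The (backward) parabolic cylinder `Q_R(x₀,t₀) = B(x₀,R) × (t₀ - R², t₀) ⊆ ℝⁿ × ℝ`. -/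
def parabolicCylinder (n : ℕ) (x₀ : EuclideanSpace ℝ (Fin n)) (t₀ R : ℝ) :
    Set (EuclideanSpace ℝ (Fin n) × ℝ) :=
  (Metric.ball x₀ R) ×ˢ (Set.Ioo (t₀ - R ^ 2) t₀)

/-- `Q` is a parabolic cylinder. -/
def IsParabolicCylinder (n : ℕ) (Q : Set (EuclideanSpace ℝ (Fin n) × ℝ)) : Prop :=
  ∃ (x₀ : EuclideanSpace ℝ (Fin n)) (t₀ R : ℝ), 0 < R ∧ Q = parabolicCylinder n x₀ t₀ R

/-- The restricted fractional maximal operator of order `α ∈ [0, N]`, `N = n + 2`, relative to a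
parabolic cylinder `Q₀`:
`M*_{α,Q₀}(g)(p) = sup { |Q|^{α/N} ⨍_Q |g| : Q ⊆ Q₀ a parabolic cylinder with p ∈ Q }`. -/
noncomputable def parMaximal (n : ℕ) (α : ℝ) (Q₀ : Set (EuclideanSpace ℝ (Fin n) × ℝ))
    (g : EuclideanSpace ℝ (Fin n) × ℝ → ℝ) (p : EuclideanSpace ℝ (Fin n) × ℝ) : ℝ≥0∞ :=
  ⨆ (Q : Set (EuclideanSpace ℝ (Fin n) × ℝ)) (_ : IsParabolicCylinder n Q) (_ : Q ⊆ Q₀)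
    (_ : p ∈ Q),
      volume Q ^ (α / ((n : ℝ) + 2)) * ((volume Q)⁻¹ * ∫⁻ q in Q, ENNReal.ofReal |g q|)

/-- The Lorentz quasinorm `‖F‖_{L(γ,q)(E)}` of an `ℝ≥0∞`-valued function `F` on `E`:
`( q ∫₀^∞ ( λ^γ |{p ∈ E : F p > λ}| )^{q/γ} dλ/λ )^{1/q}`. -/
noncomputable def lorentzNormE {n : ℕ} (E : Set (EuclideanSpace ℝ (Fin n) × ℝ))
    (F : EuclideanSpace ℝ (Fin n) × ℝ → ℝ≥0∞) (γ q : ℝ) : ℝ≥0∞ :=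
  (ENNReal.ofReal q * ∫⁻ l in Set.Ioi (0 : ℝ),
      (ENNReal.ofReal (l ^ γ) * volume {p ∈ E | ENNReal.ofReal l < F p}) ^ (q / γ) *
        ENNReal.ofReal l⁻¹) ^ (1 / q)

/-!
The set where the maximal function `M g` exceeds `l` is a union of cylinders `B` on which
`l |B|^{1 - α/N} < ∫_B |g|`. Finitely many of them cover a compact part of almost full measure, and
Vitali's lemma extracts a disjoint subfamily whose union `A` has comparable measure; as
`x ↦ x^{1 - α/N}` is subadditive, `l |A|^{1 - α/N} ≤ ∫_A |g| ≤ ∫_0^{|A|} g*`. Hence `(M g)*(t)` is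
at most a constant times `sup_{s ≥ ct} s^{α/N - 1} ∫_0^s g*`. Discretizing `s` and the Lorentz
quasinorms dyadically turns the claim into a discrete Hardy inequality, whose geometric series has
decay exponent `1 - 1/γ > 0`.
-/

/-! ### Dyadic sums -/

lemma two_rpow_add (x y : ℝ) : (2 : ℝ≥0∞) ^ (x + y) = 2 ^ x * 2 ^ y :=
  ENNReal.rpow_add x y two_ne_zero ofNat_ne_top

lemma two_rpow_ne_top (x : ℝ) : (2 : ℝ≥0∞) ^ x ≠ ⊤ := by
  simp [ENNReal.rpow_eq_top_iff]

lemma two_rpow_strictMono : StrictMono fun x : ℝ => (2 : ℝ≥0∞) ^ x :=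
  fun _ _ h => ENNReal.rpow_lt_rpow_of_exponent_lt one_lt_two ofNat_ne_top h

lemma exists_two_rpow_lt_le {x : ℝ≥0∞} (h0 : x ≠ 0) (ht : x ≠ ⊤) :
    ∃ k : ℤ, (2 : ℝ≥0∞) ^ (k : ℝ) < x ∧ x ≤ 2 ^ ((k : ℝ) + 1) := by
  obtain ⟨k, hlt, hle⟩ := ENNReal.exists_mem_Ioc_zpow h0 ht one_lt_two ofNat_ne_top
  refine ⟨k, by rwa [ENNReal.rpow_intCast], ?_⟩
  rwa [← Int.cast_one, ← Int.cast_add, ENNReal.rpow_intCast]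

lemma le_two_mul_of_forall_two_rpow_lt {x y : ℝ≥0∞}
    (h : ∀ k : ℤ, (2 : ℝ≥0∞) ^ (k : ℝ) < x → 2 ^ (k : ℝ) ≤ y) : x ≤ 2 * y := by
  refine le_of_forall_lt_imp_le_of_dense fun z hz => ?_
  rcases eq_or_ne z 0 with rfl | h0
  · exact zero_le
  obtain ⟨k, hlt, hle⟩ := exists_two_rpow_lt_le h0 hz.ne_top
  calc z ≤ 2 * 2 ^ (k : ℝ) := by rwa [two_rpow_add, ENNReal.rpow_one, mul_comm] at hle
    _ ≤ 2 * y := by gcongr; exact h k (hlt.trans hz)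

/-- The geometric series `∑ₘ 2^{-δm}`, used as the constant in the dyadic estimates. -/
noncomputable def dyadicSeries (δ : ℝ) : ℝ≥0∞ := ∑' m : ℕ, 2 ^ (-(δ * m))

lemma dyadicSeries_ne_top {δ : ℝ} (hδ : 0 < δ) : dyadicSeries δ ≠ ⊤ := by
  have hterm (m : ℕ) : (2 : ℝ≥0∞) ^ (-(δ * m)) = (2 ^ (-δ)) ^ m := by
    rw [← ENNReal.rpow_natCast, ← ENNReal.rpow_mul, neg_mul]
  have hratio : (2 : ℝ≥0∞) ^ (-δ) < 1 :=
    ENNReal.rpow_lt_one_of_one_lt_of_neg one_lt_two (neg_neg_of_pos hδ)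
  simpa [dyadicSeries, hterm, ENNReal.tsum_geometric, tsub_eq_zero_iff_le] using hratio

lemma dyadicSeries_ne_zero (δ : ℝ) : dyadicSeries δ ≠ 0 := by
  refine fun h => ?_
  simpa using ENNReal.tsum_eq_zero.1 h 0

lemma tsum_indicator_two_rpow_le {e : ℝ} (he : 0 < e) (x : ℝ≥0∞) :
    ∑' j : ℤ, (Ioi ((2 : ℝ≥0∞) ^ (j : ℝ))).indicator (fun _ => (2 : ℝ≥0∞) ^ ((j : ℝ) * e)) x ≤
      dyadicSeries e * x ^ e := by
  rcases eq_or_ne x 0 with rfl | h0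
  · simp
  rcases eq_or_ne x ⊤ with rfl | ht
  · simp [ENNReal.top_rpow_of_pos he, ENNReal.mul_top (dyadicSeries_ne_zero e)]
  obtain ⟨i, hlt, hle⟩ := exists_two_rpow_lt_le h0 ht
  have hinj : Function.Injective fun m : ℕ => i - (m : ℤ) := fun a b h => by simpa using h
  rw [← hinj.tsum_eq, dyadicSeries, ← ENNReal.tsum_mul_right]
  · refine ENNReal.tsum_le_tsum fun m => (indicator_le_self _ _ x).trans ?_
    calc (2 : ℝ≥0∞) ^ (((i - m : ℤ) : ℝ) * e)
        = 2 ^ (-(e * m)) * (2 ^ (i : ℝ)) ^ e := by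
          rw [← ENNReal.rpow_mul, ← two_rpow_add]; congr 1; push_cast; ring
      _ ≤ 2 ^ (-(e * m)) * x ^ e := by gcongr
  · intro j hj
    have hjx : (2 : ℝ≥0∞) ^ (j : ℝ) < x :=
      mem_Ioi.1 (mem_of_indicator_ne_zero (Function.mem_support.1 hj))
    have hji : (j : ℝ) < (i : ℝ) + 1 := two_rpow_strictMono.lt_iff_lt.1 (hjx.trans_le hle)
    have hji' : j < i + 1 := by exact_mod_cast hji
    exact ⟨(i - j).toNat, by dsimp only; omega⟩

section LayerCake

variable {X : Type*} [MeasurableSpace X] {μ : Measure X} {F : X → ℝ≥0∞} {e : ℝ}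

lemma tsum_two_rpow_mul_measure_lt_le (hF : Measurable F) (he : 0 < e) :
    ∑' j : ℤ, (2 : ℝ≥0∞) ^ ((j : ℝ) * e) * μ {x | 2 ^ (j : ℝ) < F x} ≤
      dyadicSeries e * ∫⁻ x, F x ^ e ∂μ := by
  calc _ = ∫⁻ x, ∑' j : ℤ, (Ioi ((2 : ℝ≥0∞) ^ (j : ℝ))).indicator
        (fun _ => (2 : ℝ≥0∞) ^ ((j : ℝ) * e)) (F x) ∂μ := by
        rw [lintegral_tsum]
        · simp only [lintegral_indicator_const_comp hF measurableSet_Ioi]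
          rfl
        · exact fun j => ((measurable_const.indicator measurableSet_Ioi).comp hF).aemeasurable
    _ ≤ ∫⁻ x, dyadicSeries e * F x ^ e ∂μ :=
        lintegral_mono fun x => tsum_indicator_two_rpow_le he (F x)
    _ = dyadicSeries e * ∫⁻ x, F x ^ e ∂μ := lintegral_const_mul _ (hF.pow_const e)

lemma lintegral_rpow_le_tsum_of_dyadic_cover {S : ℤ → Set X} (hS : ∀ j, MeasurableSet (S j))
    (he : 0 < e) (h : ∀ᵐ x ∂μ, ∀ k : ℤ, 2 ^ (k : ℝ) < F x → ∃ j ≥ k, x ∈ S j) :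
    ∫⁻ x, F x ^ e ∂μ ≤ 2 ^ e * ∑' j : ℤ, 2 ^ ((j : ℝ) * e) * μ (S j) := by
  have hpoint : ∀ᵐ x ∂μ, F x ^ e ≤
      2 ^ e * ∑' j : ℤ, (S j).indicator (fun _ => (2 : ℝ≥0∞) ^ ((j : ℝ) * e)) x := by
    filter_upwards [h] with x hx
    set T := ∑' j : ℤ, (S j).indicator (fun _ => (2 : ℝ≥0∞) ^ ((j : ℝ) * e)) x
    have hlevel : F x ≤ 2 * T ^ e⁻¹ := by
      refine le_two_mul_of_forall_two_rpow_lt fun k hk => ?_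
      obtain ⟨j, hkj, hj⟩ := hx k hk
      rw [ENNReal.le_rpow_inv_iff he, ← ENNReal.rpow_mul]
      calc (2 : ℝ≥0∞) ^ ((k : ℝ) * e) ≤ 2 ^ ((j : ℝ) * e) := by
            apply two_rpow_strictMono.monotone; gcongr
        _ = (S j).indicator (fun _ => (2 : ℝ≥0∞) ^ ((j : ℝ) * e)) x := by
            rw [indicator_of_mem hj]
        _ ≤ T := ENNReal.le_tsum j
    calc F x ^ e ≤ (2 * T ^ e⁻¹) ^ e := ENNReal.rpow_le_rpow hlevel he.le
      _ = 2 ^ e * T := by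
        rw [ENNReal.mul_rpow_of_nonneg _ _ he.le, ENNReal.rpow_inv_rpow he.ne']
  calc ∫⁻ x, F x ^ e ∂μ
      ≤ ∫⁻ x, 2 ^ e * ∑' j : ℤ, (S j).indicator (fun _ => (2 : ℝ≥0∞) ^ ((j : ℝ) * e)) x ∂μ :=
        lintegral_mono_ae hpoint
    _ = 2 ^ e * ∑' j : ℤ, 2 ^ ((j : ℝ) * e) * μ (S j) := by
        rw [lintegral_const_mul' _ _ (two_rpow_ne_top e),
          lintegral_tsum fun j => (measurable_const.indicator (hS j)).aemeasurable]
        simp only [lintegral_indicator_const (hS _)]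

end LayerCake

/-! ### A discrete Hardy inequality -/

lemma tsum_rpow_le_dyadicSeries_mul_tsum {q ε : ℝ} (hq : 0 < q) (x : ℕ → ℝ≥0∞) :
    (∑' m, x m) ^ q ≤ dyadicSeries ε ^ q * ∑' m : ℕ, 2 ^ (ε * m * q) * x m ^ q := by
  set M := ⨆ m : ℕ, 2 ^ (ε * m) * x m
  have hsum : ∑' m, x m ≤ dyadicSeries ε * M := by
    rw [dyadicSeries, ← ENNReal.tsum_mul_right]
    refine ENNReal.tsum_le_tsum fun m => ?_
    calc x m = 2 ^ (-(ε * m)) * (2 ^ (ε * m) * x m) := by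
          rw [← mul_assoc, ← two_rpow_add]; simp
      _ ≤ 2 ^ (-(ε * m)) * M := by gcongr; exact le_iSup (fun m : ℕ => 2 ^ (ε * m) * x m) m
  have hM : M ^ q ≤ ∑' m : ℕ, 2 ^ (ε * m * q) * x m ^ q := by
    rw [← ENNReal.le_rpow_inv_iff hq]
    refine iSup_le fun m => ?_
    rw [ENNReal.le_rpow_inv_iff hq, ENNReal.mul_rpow_of_nonneg _ _ hq.le, ← ENNReal.rpow_mul]
    exact ENNReal.le_tsum (f := fun m : ℕ => 2 ^ (ε * m * q) * x m ^ q) m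
  calc (∑' m, x m) ^ q ≤ (dyadicSeries ε * M) ^ q := ENNReal.rpow_le_rpow hsum hq.le
    _ = dyadicSeries ε ^ q * M ^ q := ENNReal.mul_rpow_of_nonneg _ _ hq.le
    _ ≤ _ := by gcongr

/-- The constant in the discrete Hardy inequality with decay rate `δ` and exponent `q`. -/
noncomputable def hardyConst (δ q : ℝ) : ℝ≥0∞ :=
  dyadicSeries (δ / 2) ^ q * dyadicSeries (δ / 2 * q)

lemma hardyConst_ne_top {δ q : ℝ} (hδ : 0 < δ) (hq : 0 < q) : hardyConst δ q ≠ ⊤ :=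
  ENNReal.mul_ne_top
    (ENNReal.rpow_ne_top_of_nonneg hq.le (dyadicSeries_ne_top (half_pos hδ)))
    (dyadicSeries_ne_top (by positivity))

-- Half of the decay `2^{-δm}` pays for pulling the power inside the sum, for every `q > 0`.
lemma tsum_tsum_rpow_le_hardyConst_mul_tsum {q : ℝ} (hq : 0 < q) (δ : ℝ) (c : ℤ → ℝ≥0∞) :
    ∑' k : ℤ, (∑' m : ℕ, 2 ^ (-(δ * m)) * c (k - m)) ^ q ≤ hardyConst δ q * ∑' j, c j ^ q := by
  have hterm (k : ℤ) (m : ℕ) : 2 ^ (δ / 2 * m * q) * (2 ^ (-(δ * m)) * c (k - m)) ^ q =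
      2 ^ (-(δ / 2 * q * m)) * c (k - m) ^ q := by
    rw [ENNReal.mul_rpow_of_nonneg _ _ hq.le, ← ENNReal.rpow_mul, ← mul_assoc, ← two_rpow_add]
    congr 2; ring
  have hshift (m : ℕ) : ∑' k : ℤ, c (k - m) ^ q = ∑' j, c j ^ q :=
    (Equiv.subRight (m : ℤ)).tsum_eq fun j => c j ^ q
  calc _ ≤ ∑' k : ℤ, dyadicSeries (δ / 2) ^ q *
        ∑' m : ℕ, 2 ^ (-(δ / 2 * q * m)) * c (k - m) ^ q := by
        refine ENNReal.tsum_le_tsum fun k => ?_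
        simpa only [hterm] using tsum_rpow_le_dyadicSeries_mul_tsum (ε := δ / 2) hq
          fun m : ℕ => 2 ^ (-(δ * m)) * c (k - m)
    _ = dyadicSeries (δ / 2) ^ q *
        ∑' m : ℕ, 2 ^ (-(δ / 2 * q * m)) * ∑' k : ℤ, c (k - m) ^ q := by
        rw [ENNReal.tsum_mul_left, ENNReal.tsum_comm]
        simp only [ENNReal.tsum_mul_left]
    _ = hardyConst δ q * ∑' j, c j ^ q := by
        simp only [hshift, ENNReal.tsum_mul_right, hardyConst, dyadicSeries, mul_assoc]

/-! ### Distribution functions and rearrangements -/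

/-- The distribution function `l ↦ μ {p ∈ E | F p > l}` of `F` on `E`, for real levels `l`. -/
noncomputable def distributionFunction {X : Type*} [MeasurableSpace X] (μ : Measure X) (E : Set X)
    (F : X → ℝ≥0∞) (l : ℝ) : ℝ≥0∞ :=
  μ {p ∈ E | ENNReal.ofReal l < F p}

/-- The decreasing rearrangement at `t` of a function with distribution function `d`, encoded as
the length of `{l > 0 | d l > t}`. -/
noncomputable def decreasingRearrangement (d : ℝ → ℝ≥0∞) (t : ℝ≥0∞) : ℝ≥0∞ :=
  volume {l | 0 < l ∧ t < d l}

section Distribution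

variable {X : Type*} [MeasurableSpace X] {μ : Measure X}

lemma distributionFunction_antitone (E : Set X) (F : X → ℝ≥0∞) :
    Antitone (distributionFunction μ E F) := fun _ _ hab =>
  measure_mono fun _ hp => ⟨hp.1, (ENNReal.ofReal_le_ofReal hab).trans_lt hp.2⟩

lemma setLIntegral_le_lintegral_min {A E : Set X} (hA : MeasurableSet A) (hAE : A ⊆ E) {g : X → ℝ}
    (hg : AEMeasurable g (μ.restrict A)) :
    ∫⁻ p in A, ENNReal.ofReal |g p| ∂μ ≤
      ∫⁻ l in Ioi 0, min (μ A) (distributionFunction μ E (fun p => ENNReal.ofReal |g p|) l) := by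
  rw [lintegral_eq_lintegral_meas_lt _ (ae_of_all _ fun p => abs_nonneg (g p))
    (continuous_abs.measurable.comp_aemeasurable hg)]
  refine setLIntegral_mono' measurableSet_Ioi fun l hl => ?_
  rw [Measure.restrict_apply' hA]
  refine le_min (measure_mono inter_subset_right) (measure_mono fun p hp => ⟨hAE hp.2, ?_⟩)
  exact (ENNReal.ofReal_lt_ofReal_iff_of_nonneg (mem_Ioi.1 hl).le).2 hp.1

end Distribution

lemma lintegral_min_le_tsum_decreasingRearrangement {d : ℝ → ℝ≥0∞} (hd : Measurable d) (k : ℤ) :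
    ∫⁻ l in Ioi 0, min (2 ^ ((k : ℝ) + 1)) (d l) ≤
      2 * ∑' m : ℕ, 2 ^ ((k : ℝ) - m) * decreasingRearrangement d (2 ^ ((k : ℝ) - m)) := by
  have hmeas (t : ℝ≥0∞) : MeasurableSet {l | t < d l} := hd measurableSet_Ioi
  have hrearr (t : ℝ≥0∞) : decreasingRearrangement d t = volume.restrict (Ioi 0) {l | t < d l} := by
    rw [Measure.restrict_apply (hmeas t), inter_comm]; rfl
  have hpoint (x : ℝ≥0∞) : min (2 ^ ((k : ℝ) + 1)) x ≤
      2 * ∑' m : ℕ, (Ioi ((2 : ℝ≥0∞) ^ ((k : ℝ) - m))).indicator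
        (fun _ => (2 : ℝ≥0∞) ^ ((k : ℝ) - m)) x := by
    refine le_two_mul_of_forall_two_rpow_lt fun j hj => ?_
    have hjk : (j : ℝ) < (k : ℝ) + 1 :=
      two_rpow_strictMono.lt_iff_lt.1 (hj.trans_le (min_le_left _ _))
    obtain ⟨m, hm⟩ := Int.le.dest (Int.lt_add_one_iff.1 (by exact_mod_cast hjk))
    have hjm : (j : ℝ) = (k : ℝ) - m := by rw [← hm]; push_cast; ring
    rw [hjm] at hj ⊢
    refine le_trans (le_of_eq ?_) (ENNReal.le_tsum m)
    rw [indicator_of_mem (mem_Ioi.2 (hj.trans_le (min_le_right _ _)))]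
  calc _ ≤ _ := lintegral_mono fun l => hpoint (d l)
    _ = _ := by
      rw [lintegral_const_mul' _ _ ofNat_ne_top, lintegral_tsum]
      · simp only [lintegral_indicator_const_comp hd measurableSet_Ioi, hrearr]
        rfl
      · exact fun m => ((measurable_const.indicator measurableSet_Ioi).comp hd).aemeasurable

/-! ### Lorentz quasinorms as moments of the distribution function -/

/-- The measure `q l^q dl/l = d(l^q)` on `(0,∞)`, against which the `q`-th power of a Lorentz
quasinorm integrates a power of the distribution function. -/
noncomputable def lorentzMeasure (q : ℝ) : Measure ℝ :=
  (volume.restrict (Ioi 0)).withDensity fun l => ENNReal.ofReal (q * l ^ (q - 1))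

section LorentzMeasure

variable {q : ℝ}

lemma ae_lorentzMeasure_pos : ∀ᵐ l ∂lorentzMeasure q, 0 < l :=
  (withDensity_absolutelyContinuous _ _).ae_le (ae_restrict_mem measurableSet_Ioi)

lemma lorentzMeasure_Ioc (hq : 0 < q) {r : ℝ} (hr : 0 ≤ r) :
    lorentzMeasure q (Ioc 0 r) = ENNReal.ofReal r ^ q := by
  have hint : IntegrableOn (fun l : ℝ => q * l ^ (q - 1)) (Ioc 0 r) :=
    ((intervalIntegrable_iff_integrableOn_Ioc_of_le hr).1
      (intervalIntegral.intervalIntegrable_rpow' (by linarith))).const_mul q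
  have hnonneg : 0 ≤ᵐ[volume.restrict (Ioc 0 r)] fun l : ℝ => q * l ^ (q - 1) := by
    filter_upwards [ae_restrict_mem measurableSet_Ioc] with l hl
    exact mul_nonneg hq.le (Real.rpow_nonneg hl.1.le _)
  rw [lorentzMeasure, withDensity_apply _ measurableSet_Ioc,
    Measure.restrict_restrict measurableSet_Ioc, inter_eq_left.2 Ioc_subset_Ioi_self,
    ← ofReal_integral_eq_lintegral_ofReal hint hnonneg, ← intervalIntegral.integral_of_le hr,
    intervalIntegral.integral_const_mul, integral_rpow (Or.inl (by linarith)), sub_add_cancel,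
    Real.zero_rpow hq.ne', sub_zero, mul_div_cancel₀ _ hq.ne',
    ENNReal.ofReal_rpow_of_nonneg hr hq.le]

lemma lorentzMeasure_setOf_ofReal_le_le (hq : 0 < q) (H : ℝ≥0∞) :
    lorentzMeasure q {l | ENNReal.ofReal l ≤ H} ≤ H ^ q := by
  rcases eq_or_ne H ⊤ with rfl | hH
  · simp [ENNReal.top_rpow_of_pos hq]
  calc lorentzMeasure q {l | ENNReal.ofReal l ≤ H}
      ≤ lorentzMeasure q (Ioc 0 H.toReal) := by
        refine measure_mono_ae ?_
        filter_upwards [ae_lorentzMeasure_pos] with l hl hlH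
        exact ⟨hl, (ENNReal.ofReal_le_iff_le_toReal hH).1 hlH⟩
    _ = H ^ q := by rw [lorentzMeasure_Ioc hq ENNReal.toReal_nonneg, ENNReal.ofReal_toReal hH]

lemma decreasingRearrangement_rpow_le_lorentzMeasure (hq : 0 < q) {d : ℝ → ℝ≥0∞} (hd : Antitone d)
    (t : ℝ≥0∞) :
    decreasingRearrangement d t ^ q ≤ lorentzMeasure q {l | t < d l} := by
  set M := lorentzMeasure q {l | t < d l}
  rw [← ENNReal.le_rpow_inv_iff hq]
  rcases eq_or_ne (M ^ q⁻¹) ⊤ with hM | hM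
  · exact hM ▸ le_top
  have hsub : {l | 0 < l ∧ t < d l} ⊆ Ioc 0 (M ^ q⁻¹).toReal := by
    rintro r ⟨hr, htr⟩
    refine ⟨hr, ?_⟩
    rw [← ENNReal.ofReal_le_iff_le_toReal hM, ENNReal.le_rpow_inv_iff hq,
      ← lorentzMeasure_Ioc hq hr.le]
    exact measure_mono fun l hl => htr.trans_le (hd hl.2)
  calc decreasingRearrangement d t ≤ volume (Ioc 0 (M ^ q⁻¹).toReal) := measure_mono hsub
    _ = M ^ q⁻¹ := by rw [Real.volume_Ioc, sub_zero, ENNReal.ofReal_toReal hM]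

lemma lintegral_lorentzMeasure (hq : 0 < q) {f : ℝ → ℝ≥0∞} (hf : Measurable f) :
    ∫⁻ l, f l ∂lorentzMeasure q =
      ENNReal.ofReal q * ∫⁻ l in Ioi 0, ENNReal.ofReal (l ^ (q - 1)) * f l := by
  rw [lorentzMeasure, lintegral_withDensity_eq_lintegral_mul _ (by fun_prop) hf,
    ← lintegral_const_mul' _ _ ENNReal.ofReal_ne_top]
  simp only [Pi.mul_apply, ENNReal.ofReal_mul hq.le, mul_assoc]

lemma lorentzNormE_eq_lintegral_lorentzMeasure {n : ℕ} (E : Set (EuclideanSpace ℝ (Fin n) × ℝ))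
    (F : EuclideanSpace ℝ (Fin n) × ℝ → ℝ≥0∞) {γ : ℝ} (hγ : 0 < γ) (hq : 0 < q) :
    lorentzNormE E F γ q =
      (∫⁻ l, distributionFunction volume E F l ^ (q / γ) ∂lorentzMeasure q) ^ (1 / q) := by
  have hweight {l : ℝ} (hl : 0 < l) (v : ℝ≥0∞) :
      (ENNReal.ofReal (l ^ γ) * v) ^ (q / γ) * ENNReal.ofReal l⁻¹ =
        ENNReal.ofReal (l ^ (q - 1)) * v ^ (q / γ) := by
    rw [ENNReal.mul_rpow_of_nonneg _ _ (by positivity), ENNReal.ofReal_rpow_of_pos (by positivity),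
      mul_right_comm, ← ENNReal.ofReal_mul (by positivity), ← Real.rpow_mul hl.le,
      mul_div_cancel₀ _ hγ.ne', Real.rpow_sub hl, Real.rpow_one, div_eq_mul_inv (l ^ q) l]
  rw [lintegral_lorentzMeasure hq ((distributionFunction_antitone E F).measurable.pow_const _),
    lorentzNormE, setLIntegral_congr_fun measurableSet_Ioi fun l hl => hweight hl _]
  rfl

end LorentzMeasure

/-! ### Interpolation of a dyadic rearrangement bound -/

lemma tsum_two_rpow_mul_hardy_rpow_le {q : ℝ} (hq : 0 < q) (θ β : ℝ) (K : ℝ≥0∞)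
    (b : ℝ → ℝ≥0∞) :
    ∑' j : ℤ, 2 ^ ((j : ℝ) * (q * (θ - β))) * (K * 2 ^ ((j : ℝ) * (β - 1)) *
        ∑' m : ℕ, 2 ^ ((j : ℝ) - m) * b ((j : ℝ) - m)) ^ q ≤
      K ^ q * (hardyConst (1 - θ) q * ∑' j : ℤ, 2 ^ ((j : ℝ) * (q * θ)) * b j ^ q) := by
  have hpow (x e : ℝ) (y : ℝ≥0∞) : 2 ^ (x * (q * e)) * y ^ q = (2 ^ (x * e) * y) ^ q := by
    rw [ENNReal.mul_rpow_of_nonneg _ _ hq.le, ← ENNReal.rpow_mul, mul_right_comm, mul_assoc]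
  have hterm (j m : ℝ) : 2 ^ (j * (θ - β)) * (2 ^ (j * (β - 1)) * (2 ^ (j - m) * b (j - m))) =
      2 ^ (-((1 - θ) * m)) * (2 ^ ((j - m) * θ) * b (j - m)) := by
    simp only [← mul_assoc, ← two_rpow_add]
    congr 2
    ring
  have hsum (j : ℤ) : 2 ^ ((j : ℝ) * (q * (θ - β))) * (K * 2 ^ ((j : ℝ) * (β - 1)) *
        ∑' m : ℕ, 2 ^ ((j : ℝ) - m) * b ((j : ℝ) - m)) ^ q =
      K ^ q * (∑' m : ℕ, 2 ^ (-((1 - θ) * m)) *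
        (2 ^ (((j - m : ℤ) : ℝ) * θ) * b (j - m : ℤ))) ^ q := by
    rw [hpow, ← ENNReal.mul_rpow_of_nonneg _ _ hq.le, mul_assoc K, mul_left_comm,
      ← ENNReal.tsum_mul_left, ← ENNReal.tsum_mul_left]
    simp only [hterm, Int.cast_sub, Int.cast_natCast]
  simp only [hsum, hpow, ENNReal.tsum_mul_left]
  gcongr
  exact tsum_tsum_rpow_le_hardyConst_mul_tsum hq (1 - θ) fun j => 2 ^ ((j : ℝ) * θ) * b j

lemma tsum_two_rpow_mul_decreasingRearrangement_rpow_le {q e : ℝ} (hq : 0 < q) (he : 0 < e)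
    {d : ℝ → ℝ≥0∞} (hd : Antitone d) :
    ∑' j : ℤ, 2 ^ ((j : ℝ) * e) * decreasingRearrangement d (2 ^ (j : ℝ)) ^ q ≤
      dyadicSeries e * ∫⁻ l, d l ^ e ∂lorentzMeasure q := by
  refine le_trans ?_ (tsum_two_rpow_mul_measure_lt_le hd.measurable he)
  gcongr with j
  exact decreasingRearrangement_rpow_le_lorentzMeasure hq hd _

theorem exists_lintegral_rpow_le_of_dyadic_bound {q θ β : ℝ} (hq : 0 < q) (hθ0 : 0 < θ)
    (hθ1 : θ < 1) (hβ : β < θ) {K : ℝ≥0∞} (hK : K ≠ ⊤) :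
    ∃ C : ℝ≥0∞, C ≠ ⊤ ∧ ∀ d D : ℝ → ℝ≥0∞, Antitone d →
      (∀ l, 0 < l → ∀ k : ℤ, 2 ^ (k : ℝ) < D l → ∃ j ≥ k,
        ENNReal.ofReal l ≤ K * 2 ^ ((j : ℝ) * (β - 1)) *
          ∑' m : ℕ, 2 ^ ((j : ℝ) - m) * decreasingRearrangement d (2 ^ ((j : ℝ) - m))) →
      ∫⁻ l, D l ^ (q * (θ - β)) ∂lorentzMeasure q ≤
        C * ∫⁻ l, d l ^ (q * θ) ∂lorentzMeasure q := by
  have hs : 0 < q * (θ - β) := mul_pos hq (sub_pos.2 hβ)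
  have hqθ : 0 < q * θ := mul_pos hq hθ0
  refine ⟨2 ^ (q * (θ - β)) * (K ^ q * (hardyConst (1 - θ) q * dyadicSeries (q * θ))),
    ENNReal.mul_ne_top (two_rpow_ne_top _)
      (ENNReal.mul_ne_top (ENNReal.rpow_ne_top_of_nonneg hq.le hK)
        (ENNReal.mul_ne_top (hardyConst_ne_top (sub_pos.2 hθ1) hq) (dyadicSeries_ne_top hqθ))),
    fun d D hd hD => ?_⟩
  set H : ℤ → ℝ≥0∞ := fun j => K * 2 ^ ((j : ℝ) * (β - 1)) *
    ∑' m : ℕ, 2 ^ ((j : ℝ) - m) * decreasingRearrangement d (2 ^ ((j : ℝ) - m))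
  calc ∫⁻ l, D l ^ (q * (θ - β)) ∂lorentzMeasure q
      ≤ 2 ^ (q * (θ - β)) * ∑' j : ℤ, 2 ^ ((j : ℝ) * (q * (θ - β))) *
          lorentzMeasure q {l | ENNReal.ofReal l ≤ H j} := by
        refine lintegral_rpow_le_tsum_of_dyadic_cover
          (fun j => measurableSet_le (by fun_prop) measurable_const) hs ?_
        filter_upwards [ae_lorentzMeasure_pos] with l hl using hD l hl
    _ ≤ 2 ^ (q * (θ - β)) * ∑' j : ℤ, 2 ^ ((j : ℝ) * (q * (θ - β))) * H j ^ q := by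
        gcongr with j
        exact lorentzMeasure_setOf_ofReal_le_le hq (H j)
    _ ≤ 2 ^ (q * (θ - β)) * (K ^ q * (hardyConst (1 - θ) q * ∑' j : ℤ,
          2 ^ ((j : ℝ) * (q * θ)) * decreasingRearrangement d (2 ^ (j : ℝ)) ^ q)) := by
        gcongr
        exact tsum_two_rpow_mul_hardy_rpow_le hq θ β K fun x => decreasingRearrangement d (2 ^ x)
    _ ≤ 2 ^ (q * (θ - β)) * (K ^ q * (hardyConst (1 - θ) q * (dyadicSeries (q * θ) *
          ∫⁻ l, d l ^ (q * θ) ∂lorentzMeasure q))) := by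
        gcongr
        exact tsum_two_rpow_mul_decreasingRearrangement_rpow_le hq hqθ hd
    _ = _ := by simp only [mul_assoc]

/-! ### Parabolic cylinders -/

section Cylinder

variable {n : ℕ}

lemma isOpen_parabolicCylinder (x : EuclideanSpace ℝ (Fin n)) (t R : ℝ) :
    IsOpen (parabolicCylinder n x t R) :=
  Metric.isOpen_ball.prod isOpen_Ioo

lemma parabolicCylinder_nonempty (x : EuclideanSpace ℝ (Fin n)) (t : ℝ) {R : ℝ} (hR : 0 < R) :
    (parabolicCylinder n x t R).Nonempty :=
  Set.Nonempty.prod ⟨x, Metric.mem_ball_self hR⟩ (nonempty_Ioo.2 (sub_lt_self t (by positivity)))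

lemma volume_parabolicCylinder (x : EuclideanSpace ℝ (Fin n)) (t : ℝ) {R : ℝ} (hR : 0 < R) :
    volume (parabolicCylinder n x t R) =
      ENNReal.ofReal R ^ (n + 2) * volume (Metric.ball (0 : EuclideanSpace ℝ (Fin n)) 1) := by
  have hlength : t - (t - R ^ 2) = R ^ 2 := by ring
  rw [parabolicCylinder, Measure.volume_eq_prod, Measure.prod_prod, Real.volume_Ioo, hlength,
    Measure.addHaar_ball_of_pos _ _ hR, finrank_euclideanSpace_fin,
    ENNReal.ofReal_pow hR.le, ENNReal.ofReal_pow hR.le]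
  ring

lemma IsParabolicCylinder.isOpen {Q : Set (EuclideanSpace ℝ (Fin n) × ℝ)}
    (hQ : IsParabolicCylinder n Q) : IsOpen Q := by
  obtain ⟨x, t, R, -, rfl⟩ := hQ
  exact isOpen_parabolicCylinder x t R

lemma IsParabolicCylinder.nonempty {Q : Set (EuclideanSpace ℝ (Fin n) × ℝ)}
    (hQ : IsParabolicCylinder n Q) : Q.Nonempty := by
  obtain ⟨x, t, R, hR, rfl⟩ := hQ
  exact parabolicCylinder_nonempty x t hR

lemma IsParabolicCylinder.volume_ne_zero {Q : Set (EuclideanSpace ℝ (Fin n) × ℝ)}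
    (hQ : IsParabolicCylinder n Q) : volume Q ≠ 0 :=
  (hQ.isOpen.measure_pos volume hQ.nonempty).ne'

lemma IsParabolicCylinder.volume_ne_top {Q : Set (EuclideanSpace ℝ (Fin n) × ℝ)}
    (hQ : IsParabolicCylinder n Q) : volume Q ≠ ⊤ := by
  obtain ⟨x, t, R, hR, rfl⟩ := hQ
  rw [volume_parabolicCylinder x t hR]
  exact ENNReal.mul_ne_top (ENNReal.pow_ne_top ENNReal.ofReal_ne_top) measure_ball_lt_top.ne

-- The top time moves up because parabolic cylinders extend only backwards in time.
lemma parabolicCylinder_subset_of_inter_nonempty {x x' : EuclideanSpace ℝ (Fin n)}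
    {t t' R R' : ℝ} (hR : 0 < R) (hRR' : R ≤ 2 * R')
    (h : (parabolicCylinder n x t R ∩ parabolicCylinder n x' t' R').Nonempty) :
    parabolicCylinder n x t R ⊆ parabolicCylinder n x' (t' + 4 * R' ^ 2) (5 * R') := by
  obtain ⟨⟨y, τ⟩, ⟨hy, hτ⟩, ⟨hy', hτ'⟩⟩ := h
  rintro ⟨z, σ⟩ ⟨hz, hσ⟩
  simp only [Metric.mem_ball, mem_Ioo] at hy hτ hy' hτ' hz hσ
  have hsq : R ^ 2 ≤ 4 * R' ^ 2 := by nlinarith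
  refine ⟨Metric.mem_ball.2 ?_, ?_, ?_⟩
  · calc dist z x' ≤ dist z x + dist x y + dist y x' := dist_triangle4 z x y x'
      _ < 5 * R' := by rw [dist_comm x y]; linarith
  · dsimp only
    nlinarith [sq_nonneg R']
  · dsimp only
    linarith

lemma exists_pairwiseDisjoint_subfamily_volume_sUnion_le
    {S : Set (Set (EuclideanSpace ℝ (Fin n) × ℝ))} (hfin : S.Finite)
    (hS : ∀ Q ∈ S, IsParabolicCylinder n Q) :
    ∃ u ⊆ S, u.PairwiseDisjoint id ∧ volume (⋃₀ S) ≤ 5 ^ (n + 2) * volume (⋃₀ u) := by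
  choose! x t R hR hcyl using hS
  obtain ⟨r, hr⟩ := (hfin.image R).bddAbove
  obtain ⟨u, huS, hdisj, hcov⟩ := Vitali.exists_disjoint_subfamily_covering_enlargement id S R 2
    one_lt_two (fun Q hQ => (hR Q hQ).le) r (fun Q hQ => hr (mem_image_of_mem R hQ))
    (fun Q hQ => hcyl Q hQ ▸ parabolicCylinder_nonempty _ _ (hR Q hQ))
  have hcount : u.Countable := (hfin.subset huS).countable
  have hopen : ∀ Q ∈ u, IsOpen Q := fun Q hQ =>
    hcyl Q (huS hQ) ▸ isOpen_parabolicCylinder _ _ _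
  refine ⟨u, huS, hdisj, ?_⟩
  have hsub : ⋃₀ S ⊆ ⋃ Q ∈ u, parabolicCylinder n (x Q) (t Q + 4 * R Q ^ 2) (5 * R Q) := by
    refine sUnion_subset fun Q hQ => ?_
    obtain ⟨Q', hQ', hne, hle⟩ := hcov Q hQ
    rw [id, id, hcyl Q hQ, hcyl Q' (huS hQ')] at hne
    exact ((hcyl Q hQ).trans_subset
      (parabolicCylinder_subset_of_inter_nonempty (hR Q hQ) hle hne)).trans
      (subset_biUnion_of_mem (u := fun Q =>
        parabolicCylinder n (x Q) (t Q + 4 * R Q ^ 2) (5 * R Q)) hQ')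
  have hvol : ∀ Q ∈ u, volume (parabolicCylinder n (x Q) (t Q + 4 * R Q ^ 2) (5 * R Q)) =
      5 ^ (n + 2) * volume Q := fun Q hQ => by
    have hRQ := hR Q (huS hQ)
    conv_rhs => rw [hcyl Q (huS hQ), volume_parabolicCylinder _ _ hRQ]
    rw [volume_parabolicCylinder _ _ (by positivity), ENNReal.ofReal_mul (by norm_num), mul_pow,
      ENNReal.ofReal_ofNat, mul_assoc]
  calc volume (⋃₀ S)
      ≤ ∑' Q : u, volume (parabolicCylinder n (x Q) (t Q + 4 * R Q ^ 2) (5 * R Q)) :=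
        (measure_mono hsub).trans (measure_biUnion_le _ hcount _)
    _ = ∑' Q : u, 5 ^ (n + 2) * volume (Q : Set (EuclideanSpace ℝ (Fin n) × ℝ)) :=
        tsum_congr fun Q => hvol Q Q.2
    _ = 5 ^ (n + 2) * volume (⋃₀ u) := by
        rw [ENNReal.tsum_mul_left,
          measure_sUnion hcount hdisj fun Q hQ => (hopen Q hQ).measurableSet]

end Cylinder

/-! ### Superlevel sets of the maximal function -/

lemma mul_measure_sUnion_rpow_le {X : Type*} [MeasurableSpace X] {μ ν : Measure X}
    {u : Set (Set X)} (hfin : u.Finite) (hdisj : u.PairwiseDisjoint id)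
    (hmeas : ∀ B ∈ u, MeasurableSet B) {s : ℝ} (hs0 : 0 < s) (hs1 : s ≤ 1) {c : ℝ≥0∞}
    (h : ∀ B ∈ u, c * μ B ^ s ≤ ν B) : c * μ (⋃₀ u) ^ s ≤ ν (⋃₀ u) := by
  lift u to Finset (Set X) using hfin
  have hunion (m : Measure X) : m (⋃₀ (u : Set (Set X))) = ∑ B ∈ u, m B := by
    rw [sUnion_eq_biUnion]
    exact measure_biUnion_finset hdisj hmeas
  calc c * μ (⋃₀ (u : Set (Set X))) ^ s = c * (∑ B ∈ u, μ B) ^ s := by rw [hunion]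
    _ ≤ c * ∑ B ∈ u, μ B ^ s := by
        gcongr
        exact Finset.le_sum_of_subadditive (fun x : ℝ≥0∞ => x ^ s)
          (ENNReal.zero_rpow_of_pos hs0).le
          (fun x y => ENNReal.rpow_add_le_add_rpow x y hs0.le hs1) u _
    _ = ∑ B ∈ u, c * μ B ^ s := Finset.mul_sum ..
    _ ≤ ∑ B ∈ u, ν B := Finset.sum_le_sum h
    _ = ν (⋃₀ (u : Set (Set X))) := (hunion ν).symm

lemma le_tsum_decreasingRearrangement_of_mul_rpow_le_setLIntegral {X : Type*} [MeasurableSpace X]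
    {μ : Measure X} {A E : Set X} (hA : MeasurableSet A) (hAE : A ⊆ E) {g : X → ℝ}
    (hg : AEMeasurable g (μ.restrict A)) {β : ℝ} (hβ : β ≤ 1) {c C : ℝ≥0∞} {j : ℤ}
    (hc : c * μ A ^ (1 - β) ≤ ∫⁻ p in A, ENNReal.ofReal |g p| ∂μ)
    (hlt : 2 ^ (j : ℝ) < C * μ A) (hle : μ A ≤ 2 ^ ((j : ℝ) + 1)) :
    c ≤ C ^ (1 - β) * 2 * 2 ^ ((j : ℝ) * (β - 1)) *
      ∑' m : ℕ, 2 ^ ((j : ℝ) - m) * decreasingRearrangement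
        (distributionFunction μ E fun p => ENNReal.ofReal |g p|) (2 ^ ((j : ℝ) - m)) := by
  set d := distributionFunction μ E fun p => ENNReal.ofReal |g p|
  have hs : 0 ≤ 1 - β := sub_nonneg.2 hβ
  have hint : ∫⁻ p in A, ENNReal.ofReal |g p| ∂μ ≤
      2 * ∑' m : ℕ, 2 ^ ((j : ℝ) - m) * decreasingRearrangement d (2 ^ ((j : ℝ) - m)) :=
    calc ∫⁻ p in A, ENNReal.ofReal |g p| ∂μ ≤ ∫⁻ l in Ioi 0, min (μ A) (d l) :=
          setLIntegral_le_lintegral_min hA hAE hg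
      _ ≤ ∫⁻ l in Ioi 0, min (2 ^ ((j : ℝ) + 1)) (d l) := by gcongr
      _ ≤ _ := lintegral_min_le_tsum_decreasingRearrangement
          (distributionFunction_antitone E _).measurable j
  calc c = 2 ^ ((j : ℝ) * (β - 1)) * (2 ^ (j : ℝ)) ^ (1 - β) * c := by
        rw [← ENNReal.rpow_mul, ← two_rpow_add, ← mul_add]
        simp
    _ ≤ 2 ^ ((j : ℝ) * (β - 1)) * (C * μ A) ^ (1 - β) * c := by gcongr
    _ = C ^ (1 - β) * 2 ^ ((j : ℝ) * (β - 1)) * (c * μ A ^ (1 - β)) := by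
        rw [ENNReal.mul_rpow_of_nonneg _ _ hs]
        ring
    _ ≤ C ^ (1 - β) * 2 ^ ((j : ℝ) * (β - 1)) *
        (2 * ∑' m : ℕ, 2 ^ ((j : ℝ) - m) * decreasingRearrangement d (2 ^ ((j : ℝ) - m))) :=
        mul_le_mul' le_rfl (hc.trans hint)
    _ = _ := by ring

section Maximal

variable {n : ℕ} {α : ℝ}

/-- The fractional average `|B|^{α/N} ⨍_B |g|`, `N = n + 2`, whose supremum over cylinders is the
maximal function. -/
noncomputable def fractionalAverage (n : ℕ) (α : ℝ) (g : EuclideanSpace ℝ (Fin n) × ℝ → ℝ)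
    (B : Set (EuclideanSpace ℝ (Fin n) × ℝ)) : ℝ≥0∞ :=
  volume B ^ (α / ((n : ℝ) + 2)) * ((volume B)⁻¹ * ∫⁻ p in B, ENNReal.ofReal |g p|)

lemma IsParabolicCylinder.fractionalAverage_mul_rpow {B : Set (EuclideanSpace ℝ (Fin n) × ℝ)}
    (hB : IsParabolicCylinder n B) (α : ℝ) (g : EuclideanSpace ℝ (Fin n) × ℝ → ℝ) :
    fractionalAverage n α g B * volume B ^ (1 - α / ((n : ℝ) + 2)) =
      ∫⁻ p in B, ENNReal.ofReal |g p| := by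
  have hV0 := hB.volume_ne_zero
  have hVt := hB.volume_ne_top
  rw [fractionalAverage, mul_right_comm, ← ENNReal.rpow_add _ _ hV0 hVt, add_sub_cancel,
    ENNReal.rpow_one, ← mul_assoc, ENNReal.mul_inv_cancel hV0 hVt, one_mul]

lemma setOf_lt_parMaximal_eq_sUnion (Q : Set (EuclideanSpace ℝ (Fin n) × ℝ))
    (g : EuclideanSpace ℝ (Fin n) × ℝ → ℝ) (c : ℝ≥0∞) :
    {p ∈ Q | c < parMaximal n α Q g p} =
      ⋃₀ {B | IsParabolicCylinder n B ∧ B ⊆ Q ∧ c < fractionalAverage n α g B} := by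
  ext p
  simp only [parMaximal, lt_iSup_iff, mem_sUnion, mem_ofPred_eq]
  constructor
  · rintro ⟨-, B, hB, hBQ, hp, hc⟩
    exact ⟨B, ⟨hB, hBQ, hc⟩, hp⟩
  · rintro ⟨B, ⟨hB, hBQ, hc⟩, hp⟩
    exact ⟨hBQ hp, B, hB, hBQ, hp, hc⟩

lemma exists_subset_of_lt_volume_setOf_lt_parMaximal (hα0 : 0 ≤ α) (hαn : α < (n : ℝ) + 2)
    {Q : Set (EuclideanSpace ℝ (Fin n) × ℝ)} {g : EuclideanSpace ℝ (Fin n) × ℝ → ℝ}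
    {c t : ℝ≥0∞} (ht : t < volume {p ∈ Q | c < parMaximal n α Q g p}) :
    ∃ A ⊆ Q, MeasurableSet A ∧ volume A ≠ ⊤ ∧ t < 5 ^ (n + 2) * volume A ∧
      c * volume A ^ (1 - α / ((n : ℝ) + 2)) ≤ ∫⁻ p in A, ENNReal.ofReal |g p| := by
  have hN : (0 : ℝ) < (n : ℝ) + 2 := by positivity
  have hβ0 : 0 ≤ α / ((n : ℝ) + 2) := by positivity
  have hβ1 : α / ((n : ℝ) + 2) < 1 := (div_lt_one hN).2 hαn
  rw [setOf_lt_parMaximal_eq_sUnion] at ht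
  set 𝓑 := {B | IsParabolicCylinder n B ∧ B ⊆ Q ∧ c < fractionalAverage n α g B}
  have h𝓑 : ∀ B ∈ 𝓑, IsOpen B := fun B hB => hB.1.isOpen
  obtain ⟨K, hKsub, hK, htK⟩ := (isOpen_sUnion h𝓑).exists_lt_isCompact ht
  rw [sUnion_eq_biUnion] at hKsub
  obtain ⟨S, hS𝓑, hSfin, hKS⟩ := hK.elim_finite_subcover_image h𝓑 hKsub
  rw [← sUnion_eq_biUnion] at hKS
  obtain ⟨u, huS, hdisj, hvol⟩ :=
    exists_pairwiseDisjoint_subfamily_volume_sUnion_le hSfin fun B hB => (hS𝓑 hB).1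
  have hu : ∀ B ∈ u, B ∈ 𝓑 := fun B hB => hS𝓑 (huS hB)
  have hufin : u.Finite := hSfin.subset huS
  have hmeas : ∀ B ∈ u, MeasurableSet B := fun B hB => (hu B hB).1.isOpen.measurableSet
  have hA : MeasurableSet (⋃₀ u) := .sUnion hufin.countable hmeas
  refine ⟨⋃₀ u, sUnion_subset fun B hB => (hu B hB).2.1, hA, ?_,
    htK.trans_le ((measure_mono hKS).trans hvol), ?_⟩
  · rw [sUnion_eq_biUnion]
    exact (measure_biUnion_lt_top hufin fun B hB => (hu B hB).1.volume_ne_top.lt_top).ne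
  · rw [← withDensity_apply _ hA]
    refine mul_measure_sUnion_rpow_le hufin hdisj hmeas (by linarith) (by linarith) fun B hB => ?_
    rw [withDensity_apply _ (hmeas B hB), ← (hu B hB).1.fractionalAverage_mul_rpow α g]
    gcongr
    exact (hu B hB).2.2.le

lemma exists_le_tsum_decreasingRearrangement_of_two_rpow_lt (hα0 : 0 ≤ α)
    (hαn : α < (n : ℝ) + 2) {Q : Set (EuclideanSpace ℝ (Fin n) × ℝ)}
    {g : EuclideanSpace ℝ (Fin n) × ℝ → ℝ} (hg : AEMeasurable g (volume.restrict Q)) {c : ℝ≥0∞}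
    {k : ℤ} (hk : 2 ^ (k : ℝ) < volume {p ∈ Q | c < parMaximal n α Q g p}) :
    ∃ j ≥ k, c ≤ (5 ^ (n + 2)) ^ (1 - α / ((n : ℝ) + 2)) * 2 *
      2 ^ ((j : ℝ) * (α / ((n : ℝ) + 2) - 1)) *
        ∑' m : ℕ, 2 ^ ((j : ℝ) - m) * decreasingRearrangement
          (distributionFunction volume Q fun p => ENNReal.ofReal |g p|) (2 ^ ((j : ℝ) - m)) := by
  have hβ : α / ((n : ℝ) + 2) ≤ 1 := (div_le_one (by positivity)).2 hαn.le
  obtain ⟨A, hAQ, hA, hAtop, hkA, hcA⟩ := exists_subset_of_lt_volume_setOf_lt_parMaximal hα0 hαn hk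
  obtain ⟨j, hlt, hle⟩ := exists_two_rpow_lt_le hkA.ne_bot
    (ENNReal.mul_ne_top (ENNReal.pow_ne_top ofNat_ne_top) hAtop)
  have hkj : (k : ℝ) < (j : ℝ) + 1 := two_rpow_strictMono.lt_iff_lt.1 (hkA.trans_le hle)
  have hAle : volume A ≤ 5 ^ (n + 2) * volume A :=
    le_mul_of_one_le_left' (one_le_pow_of_one_le' (by norm_num) _)
  exact ⟨j, Int.lt_add_one_iff.1 (by exact_mod_cast hkj),
    le_tsum_decreasingRearrangement_of_mul_rpow_le_setLIntegral hA hAQ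
      (hg.mono_measure (Measure.restrict_mono_set _ hAQ)) hβ hcA hlt (hAle.trans hle)⟩

end Maximal

theorem maximal_lorentz_bound_general (n : ℕ) (α γ q : ℝ) (hα0 : 0 ≤ α) (hγ : 1 < γ)
    (hαγ : α * γ < (n : ℝ) + 2) (hq : 0 < q) :
    ∃ c : ℝ, 0 < c ∧
      ∀ (Q : Set (EuclideanSpace ℝ (Fin n) × ℝ)) (g : EuclideanSpace ℝ (Fin n) × ℝ → ℝ),
        AEMeasurable g (volume.restrict Q) →
        lorentzNormE Q (parMaximal n α Q g)
            (((n : ℝ) + 2) * γ / (((n : ℝ) + 2) - α * γ)) q ≤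
          ENNReal.ofReal c * lorentzNormE Q (fun p => ENNReal.ofReal |g p|) γ q := by
  have hN : (0 : ℝ) < (n : ℝ) + 2 := by positivity
  have hγ0 : 0 < γ := by linarith
  have hαn : α < (n : ℝ) + 2 := by nlinarith
  have hβ : α / ((n : ℝ) + 2) < γ⁻¹ := by rwa [div_lt_iff₀ hN, ← div_eq_inv_mul, lt_div_iff₀ hγ0]
  have hexp : q / (((n : ℝ) + 2) * γ / (((n : ℝ) + 2) - α * γ)) =
      q * (γ⁻¹ - α / ((n : ℝ) + 2)) := by
    field_simp
  obtain ⟨C, hC, hbound⟩ := exists_lintegral_rpow_le_of_dyadic_bound hq (inv_pos.2 hγ0)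
    (inv_lt_one_of_one_lt₀ hγ) hβ (K := (5 ^ (n + 2)) ^ (1 - α / ((n : ℝ) + 2)) * 2)
    (by finiteness)
  have hC' : C ^ (1 / q) ≠ ⊤ := ENNReal.rpow_ne_top_of_nonneg (by positivity) hC
  refine ⟨(C ^ (1 / q)).toReal + 1, by positivity, fun Q g hg => ?_⟩
  rw [lorentzNormE_eq_lintegral_lorentzMeasure Q _ (div_pos (by positivity) (sub_pos.2 hαγ)) hq,
    lorentzNormE_eq_lintegral_lorentzMeasure Q _ hγ0 hq, hexp, div_eq_mul_inv q γ]
  refine (ENNReal.rpow_le_rpow (hbound _ _ (distributionFunction_antitone Q _) fun l _ k hk =>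
    exists_le_tsum_decreasingRearrangement_of_two_rpow_lt hα0 hαn hg hk) (by positivity)).trans ?_
  rw [ENNReal.mul_rpow_of_nonneg _ _ (by positivity)]
  gcongr
  exact (ENNReal.le_ofReal_iff_toReal_le hC' (by positivity)).2 (le_add_of_nonneg_right one_pos.le)

/-- Lorentz space boundedness of the restricted fractional maximal operator:
for `α ∈ [0,N)`, `γ > 1` with `αγ < N` (`N = n + 2`) and `q ∈ (0,∞)` there exists
`c = c(α,γ,n,q)` such that on every parabolic cylinder `Q`,
`‖M*_{α,Q}(g)‖_{L(Nγ/(N-αγ),q)(Q)} ≤ c ‖g‖_{L(γ,q)(Q)}`. -/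
theorem maximal_lorentz_bound (n : ℕ) (hn : 2 ≤ n) (α γ q : ℝ)
    (hα0 : 0 ≤ α) (hαN : α < (n : ℝ) + 2) (hγ : 1 < γ) (hαγ : α * γ < (n : ℝ) + 2)
    (hq : 0 < q) :
    ∃ c : ℝ, 0 < c ∧
      ∀ Q : Set (EuclideanSpace ℝ (Fin n) × ℝ), IsParabolicCylinder n Q →
      ∀ g : EuclideanSpace ℝ (Fin n) × ℝ → ℝ, Measurable g →
        lorentzNormE Q (fun p => ENNReal.ofReal |g p|) γ q < ⊤ →
        lorentzNormE Q (parMaximal n α Q g)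
            (((n : ℝ) + 2) * γ / (((n : ℝ) + 2) - α * γ)) q ≤
          ENNReal.ofReal c * lorentzNormE Q (fun p => ENNReal.ofReal |g p|) γ q := by
  obtain ⟨c, hc, hbound⟩ := maximal_lorentz_bound_general n α γ q hα0 hγ hαγ hq
  exact ⟨c, hc, fun Q _ g hg _ => hbound Q g hg.aemeasurable⟩
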